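/- Let G = (V,E) be a finite multigraph with vertex weights q_v and let e be a semi-regular edge (not a self-loop) joining distinct vertices v₁ and v₂. Then the generalized first Symanzik polynomial satisfies 𝒰_G(α,q) = α_e · 𝒰_{G−e}(α,q) + 𝒰_{G/e}(α,q), where in the contracted graph G/e the merged vertex carries the weight q_{v₁} + q_{v₂}. -/

import Mathlib

/-!
Split the forests of `G` according to whether they contain `e`. Those avoiding `e` are the forests
of `G - e`, with the same components and one additional factor `α e`. Those containing `e` are
`insert e B` with `B` a forest of `G / e`: two vertices are joined by `insert e B` in `G` exactly
when their classes are joined by `B` in `G / e` (`reach_contract`), so the components correspond,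
and the weight of a component of `G / e` is the sum of the weights of its classes, hence
of its vertices (`prod_class_sum`).

Acyclicity is handled through reachability: an edge of `A` is a bridge of `(V, A)` iff its endpoints
are not joined by `A.erase f` (`isForest_iff`). The only nontrivial point is that when `B` is
acyclic in `G / e`, the edge `e` does not close a cycle with `B`; this is the exchange argument
`exists_exchange`: if `B` joins the distinct endpoints of `e`, then some `f ∈ B` has its endpoints
joined by `B - f + e`.
-/

open Finset

attribute [local instance] Classical.propDecidable

/-- A finite multigraph: vertex type `V`, edge type `E`, each edge carrying an
ordered pair of (possibly equal) endpoints (the order is an arbitrary orientation). -/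
structure Multigraph (V E : Type) where
  ends : E → V × V

namespace Multigraph

variable {V E Fl : Type} {d : ℕ}

/-- `v` and `w` are joined by an edge of `A`. -/
def edgeRel (G : Multigraph V E) (A : Finset E) (v w : V) : Prop :=
  ∃ e ∈ A, G.ends e = (v, w) ∨ G.ends e = (w, v)

/-- The partition of `V` into connected components of the spanning subgraph `(V, A)`. -/
def compSetoid (G : Multigraph V E) (A : Finset E) : Setoid V :=
  Relation.EqvGen.setoid (G.edgeRel A)

/-- `v` and `w` lie in the same connected component of the spanning subgraph `(V, A)`. -/
def Reach (G : Multigraph V E) (A : Finset E) (v w : V) : Prop :=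
  Relation.EqvGen (G.edgeRel A) v w

/-- `k A`: the number of connected components of the spanning subgraph `(V, A)`. -/
noncomputable def k (G : Multigraph V E) (A : Finset E) : ℕ :=
  Nat.card (Quotient (G.compSetoid A))

/-- The rank `r(A) = |V| - k(A)` of the spanning subgraph `(V, A)`. -/
noncomputable def rank (G : Multigraph V E) (A : Finset E) : ℕ :=
  Nat.card V - G.k A

/-- The nullity `n(A) = |A| + k(A) - |V|` of the spanning subgraph `(V, A)`. -/
noncomputable def nullity (G : Multigraph V E) (A : Finset E) : ℕ :=
  A.card + G.k A - Nat.card V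

/-- A self-loop: both endpoints coincide. -/
def IsLoop (G : Multigraph V E) (e : E) : Prop :=
  (G.ends e).1 = (G.ends e).2

/-- A bridge: deleting the edge increases the number of connected components. -/
def IsBridge (G : Multigraph V E) [Fintype E] (e : E) : Prop :=
  G.k (Finset.univ.erase e) ≠ G.k Finset.univ

/-- The Tutte polynomial, via the subset (rank–nullity) expansion. -/
noncomputable def tutte (G : Multigraph V E) [Fintype E] (x y : ℝ) : ℝ :=
  ∑ A : Finset E,
    (x - 1) ^ (G.rank Finset.univ - G.rank A) * (y - 1) ^ G.nullity A

/-- Deletion of the edge `e`. -/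
def delete (G : Multigraph V E) (e : E) : Multigraph V {e' : E // e' ≠ e} :=
  ⟨fun e' => G.ends e'⟩

/-- The setoid identifying the two endpoints of `e`. -/
def contrSetoid (G : Multigraph V E) (e : E) : Setoid V :=
  Relation.EqvGen.setoid (fun v w => G.ends e = (v, w))

/-- Contraction of the edge `e`: its endpoints are identified and `e` is removed.
(For a self-loop this yields a graph isomorphic to the deletion `G - e`,
in accordance with the convention `G/e = G - e` for self-loops.) -/
def contract (G : Multigraph V E) (e : E) :
    Multigraph (Quotient (G.contrSetoid e)) {e' : E // e' ≠ e} :=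
  ⟨fun e' => (Quotient.mk _ (G.ends e'.1).1, Quotient.mk _ (G.ends e'.1).2)⟩

/-- The multivariate Tutte polynomial `Z_G(q, β)`. -/
noncomputable def multiTutte (G : Multigraph V E) [Fintype E] (q : ℝ) (β : E → ℝ) : ℝ :=
  ∑ A : Finset E, q ^ G.k A * ∏ e ∈ A, β e

/-- `(V, A)` is acyclic (a forest): every edge of `A` is a bridge of `(V, A)`. -/
def IsForest (G : Multigraph V E) [DecidableEq E] (A : Finset E) : Prop :=
  ∀ e ∈ A, G.k (A.erase e) ≠ G.k A

/-- First Symanzik polynomial: sum over spanning trees `T` of `∏_{e ∉ T} α_e`. -/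
noncomputable def treePoly (G : Multigraph V E) [Fintype E] [DecidableEq E] (α : E → ℝ) : ℝ :=
  ∑ A ∈ Finset.univ.filter (fun A => G.IsForest A ∧ G.k A = 1),
    ∏ e ∈ Finset.univ \ A, α e

/-- The total weight `q_C` of the component `c` of the spanning subgraph `(V, A)`. -/
noncomputable def qComp (G : Multigraph V E) [Fintype V] (A : Finset E) (q : V → ℝ)
    (c : Quotient (G.compSetoid A)) : ℝ :=
  ∑ v ∈ Finset.univ.filter (fun v => Quotient.mk (G.compSetoid A) v = c), q v

/-- Generalized first Symanzik polynomial `𝒰_G(α, q)`. -/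
noncomputable def genU (G : Multigraph V E) [Fintype V] [Fintype E] [DecidableEq E]
    (α : E → ℝ) (q : V → ℝ) : ℝ :=
  ∑ A ∈ Finset.univ.filter (fun A => G.IsForest A),
    (∏ e ∈ Finset.univ \ A, α e) * ∏ c : Quotient (G.compSetoid A), G.qComp A q c

end Multigraph

/-- Euclidean dot product on `ℝ^d`. -/
def dotp {d : ℕ} (x y : Fin d → ℝ) : ℝ := ∑ i, x i * y i

/-- Total flag momentum `p_v` at the vertex `v`. -/
noncomputable def flagP {V Fl : Type} {d : ℕ} [Fintype Fl] (attach : Fl → V)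
    (p : Fl → Fin d → ℝ) (v : V) : Fin d → ℝ :=
  ∑ f ∈ Finset.univ.filter (fun f => attach f = v), p f

namespace Multigraph

/-- Total momentum `p_C` of the component `c` of the spanning subgraph `(V, A)`. -/
noncomputable def pComp (G : Multigraph V E) [Fintype Fl] (A : Finset E) (attach : Fl → V)
    (p : Fl → Fin d → ℝ) (c : Quotient (G.compSetoid A)) : Fin d → ℝ :=
  ∑ f ∈ Finset.univ.filter (fun f => Quotient.mk (G.compSetoid A) (attach f) = c), p f

/-- Generalized second Symanzik polynomial `𝒱_G(α, q, p)`. -/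
noncomputable def genV (G : Multigraph V E) [Fintype V] [Fintype E] [DecidableEq E] [Fintype Fl]
    (α : E → ℝ) (q : V → ℝ) (attach : Fl → V) (p : Fl → Fin d → ℝ) : ℝ :=
  ∑ A ∈ Finset.univ.filter (fun A => G.IsForest A),
    (∏ e ∈ Finset.univ \ A, α e) *
      ∑ c : Quotient (G.compSetoid A),
        dotp (G.pComp A attach p c) (G.pComp A attach p c) *
          ∏ c' ∈ Finset.univ.erase c, G.qComp A q c'

/-- Adding one new edge joining `v` and `v'`. -/
def addEdge (G : Multigraph V E) (v v' : V) : Multigraph V (Option E) :=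
  ⟨fun e => e.elim (v, v') G.ends⟩

/-- Signed incidence matrix `ε_{ev}` (vanishing on self-loops). -/
noncomputable def eps (G : Multigraph V E) (e : E) (v : V) : ℝ :=
  (if (G.ends e).1 = v then 1 else 0) - (if (G.ends e).2 = v then 1 else 0)

end Multigraph


namespace Multigraph

/-! ### Reachability and edge exchange -/

theorem Reach.mono {V E : Type} {G : Multigraph V E} {A B : Finset E} (h : A ⊆ B) {v w : V}
    (r : G.Reach A v w) : G.Reach B v w :=
  Relation.EqvGen.mono (fun _ _ ⟨f, hf, hh⟩ => ⟨f, h hf, hh⟩) _ _ r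

theorem reach_of_mem {V E : Type} (G : Multigraph V E) {A : Finset E} {f : E} (h : f ∈ A) :
    G.Reach A (G.ends f).1 (G.ends f).2 :=
  Relation.EqvGen.rel _ _ ⟨f, h, Or.inl rfl⟩

/-- A walk using the edges of `C` and `f` can be shortened to use `f` at most once. -/
theorem reach_insert {V E : Type} [DecidableEq E] (G : Multigraph V E) {C : Finset E} {f : E}
    {v w : V} (h : G.Reach (insert f C) v w) :
    G.Reach C v w ∨ (G.Reach C v (G.ends f).1 ∧ G.Reach C (G.ends f).2 w) ∨
      (G.Reach C v (G.ends f).2 ∧ G.Reach C (G.ends f).1 w) := by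
  have tr : ∀ {a b c}, G.Reach C a b → G.Reach C b c → G.Reach C a c :=
    fun h1 h2 => Relation.EqvGen.trans _ _ _ h1 h2
  have sy : ∀ {a b}, G.Reach C a b → G.Reach C b a := fun h1 => Relation.EqvGen.symm _ _ h1
  have rf : ∀ a, G.Reach C a a := fun a => Relation.EqvGen.refl a
  induction h with
  | rel v w h =>
    obtain ⟨g, hg, hh⟩ := h
    rcases Finset.mem_insert.1 hg with rfl | hg
    · rcases hh with hh | hh
      · right; left; rw [hh]; exact ⟨rf _, rf _⟩
      · right; right; rw [hh]; exact ⟨rf _, rf _⟩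
    · exact Or.inl (Relation.EqvGen.rel _ _ ⟨g, hg, hh⟩)
  | refl v => exact Or.inl (rf v)
  | symm v w _ ih =>
    rcases ih with h | ⟨h1, h2⟩ | ⟨h1, h2⟩
    · exact Or.inl (sy h)
    · exact Or.inr (Or.inr ⟨sy h2, sy h1⟩)
    · exact Or.inr (Or.inl ⟨sy h2, sy h1⟩)
  | trans u v w _ _ ih1 ih2 =>
    rcases ih1 with h | ⟨h1, h2⟩ | ⟨h1, h2⟩ <;> rcases ih2 with k | ⟨k1, k2⟩ | ⟨k1, k2⟩
    · exact Or.inl (tr h k)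
    · exact Or.inr (Or.inl ⟨tr h k1, k2⟩)
    · exact Or.inr (Or.inr ⟨tr h k1, k2⟩)
    · exact Or.inr (Or.inl ⟨h1, tr h2 k⟩)
    · exact Or.inr (Or.inl ⟨h1, k2⟩)
    · exact Or.inl (tr h1 k2)
    · exact Or.inr (Or.inr ⟨h1, tr h2 k⟩)
    · exact Or.inl (tr h1 k2)
    · exact Or.inr (Or.inr ⟨h1, k2⟩)

/-- If `B` joins the distinct endpoints of `e`, then `e` can replace some edge `f` of `B` without
disconnecting the endpoints of `f`: any edge of a path in `B` between the endpoints of `e`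
will do. -/
theorem exists_exchange {V E : Type} [DecidableEq E] (G : Multigraph V E) {e : E}
    (hloop : ¬ G.IsLoop e) (B : Finset E) (h : G.Reach B (G.ends e).1 (G.ends e).2) :
    ∃ f ∈ B, G.Reach (insert e (B.erase f)) (G.ends f).1 (G.ends f).2 := by
  induction B using Finset.induction_on with
  | empty =>
    exfalso
    apply hloop
    unfold IsLoop
    generalize (G.ends e).1 = a at h
    generalize (G.ends e).2 = b at h
    induction h with
    | rel _ _ h => obtain ⟨g, hg, _⟩ := h; simp at hg
    | refl _ => rfl
    | symm _ _ _ ih => exact ih.symm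
    | trans _ _ _ _ _ ih1 ih2 => exact ih1.trans ih2
  | insert f C hf ih =>
    have hC : ∀ {v w}, G.Reach C v w → G.Reach (insert e C) v w :=
      fun h => h.mono (Finset.subset_insert _ _)
    have he := G.reach_of_mem (Finset.mem_insert_self e C)
    rcases G.reach_insert h with h | ⟨h1, h2⟩ | ⟨h1, h2⟩
    · obtain ⟨g, hg, hr⟩ := ih h
      exact ⟨g, Finset.mem_insert_of_mem hg, hr.mono (Finset.insert_subset_insert _
        (Finset.erase_subset_erase _ (Finset.subset_insert _ _)))⟩
    · refine ⟨f, Finset.mem_insert_self _ _, ?_⟩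
      rw [Finset.erase_insert hf]
      exact .trans _ _ _ (.symm _ _ (hC h1)) (.trans _ _ _ he (.symm _ _ (hC h2)))
    · refine ⟨f, Finset.mem_insert_self _ _, ?_⟩
      rw [Finset.erase_insert hf]
      exact .trans _ _ _ (hC h2) (.trans _ _ _ (.symm _ _ he) (hC h1))

/-! ### Bridges and forests -/

theorem k_erase_eq_iff {V E : Type} [Finite V] [DecidableEq E] (G : Multigraph V E)
    {A : Finset E} {f : E} (hf : f ∈ A) :
    G.k (A.erase f) = G.k A ↔ G.Reach (A.erase f) (G.ends f).1 (G.ends f).2 := by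
  constructor
  · intro h
    -- The quotient map to the coarser partition is surjective, hence injective if cardinals agree.
    let m : Quotient (G.compSetoid (A.erase f)) → Quotient (G.compSetoid A) :=
      Quotient.map' id fun _ _ r => Reach.mono (Finset.erase_subset f A) r
    have hm : Function.Surjective m := by
      intro c
      induction c using Quotient.inductionOn with
      | h v => exact ⟨Quotient.mk _ v, rfl⟩
    have hb := (Nat.bijective_iff_surjective_and_card m).2 ⟨hm, h⟩
    have : m (Quotient.mk _ (G.ends f).1) = m (Quotient.mk _ (G.ends f).2) :=
      Quotient.sound (s := G.compSetoid A) (G.reach_of_mem hf)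
    exact Quotient.exact (hb.1 this)
  · intro h
    have : G.compSetoid (A.erase f) = G.compSetoid A := by
      ext v w
      refine ⟨fun r => Reach.mono (Finset.erase_subset f A) r, fun r => ?_⟩
      change G.Reach A v w at r
      rw [← Finset.insert_erase hf] at r
      rcases G.reach_insert r with r | ⟨h1, h2⟩ | ⟨h1, h2⟩
      · exact r
      · exact .trans _ _ _ h1 (.trans _ _ _ h h2)
      · exact .trans _ _ _ h1 (.trans _ _ _ (.symm _ _ h) h2)
    unfold k
    rw [this]

theorem isForest_iff {V E : Type} [Finite V] [DecidableEq E] (G : Multigraph V E) (A : Finset E) :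
    G.IsForest A ↔ ∀ f ∈ A, ¬ G.Reach (A.erase f) (G.ends f).1 (G.ends f).2 :=
  forall₂_congr fun _ hf => not_congr (G.k_erase_eq_iff hf)

/-! ### Deletion and contraction: components and forests -/

/-- A set of edges of `G - e` or `G / e`, viewed as a set of edges of `G`. -/
def lift {E : Type} {e : E} (B : Finset {e' : E // e' ≠ e}) : Finset E :=
  B.map (Function.Embedding.subtype _)

theorem mem_lift {E : Type} {e : E} {B : Finset {e' : E // e' ≠ e}} {f : E} :
    f ∈ lift B ↔ ∃ h : f ≠ e, ⟨f, h⟩ ∈ B := by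
  simp [lift]

theorem lift_erase {E : Type} [DecidableEq E] {e : E} [DecidableEq {e' : E // e' ≠ e}]
    (B : Finset {e' : E // e' ≠ e}) (f : {e' : E // e' ≠ e}) :
    lift (B.erase f) = (lift B).erase f.1 := by
  ext g
  simp only [mem_lift, Finset.mem_erase, ne_eq, Subtype.ext_iff]
  tauto

theorem reach_delete {V E : Type} (G : Multigraph V E) (e : E) (B : Finset {e' : E // e' ≠ e})
    (v w : V) : (G.delete e).Reach B v w ↔ G.Reach (lift B) v w := by
  have : (G.delete e).edgeRel B = G.edgeRel (lift B) := by
    ext v w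
    constructor
    · rintro ⟨f, hf, h⟩
      exact ⟨f.1, mem_lift.2 ⟨f.2, hf⟩, h⟩
    · rintro ⟨f, hf, h⟩
      obtain ⟨hne, hf⟩ := mem_lift.1 hf
      exact ⟨⟨f, hne⟩, hf, h⟩
  unfold Reach
  rw [this]

theorem reach_contract {V E : Type} [DecidableEq E] (G : Multigraph V E) (e : E)
    (B : Finset {e' : E // e' ≠ e}) (v w : V) :
    (G.contract e).Reach B (Quotient.mk _ v) (Quotient.mk _ w)
      ↔ G.Reach (insert e (lift B)) v w := by
  have hmk : ∀ {v w : V}, Quotient.mk (G.contrSetoid e) v = Quotient.mk _ w →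
      G.Reach (insert e (lift B)) v w := fun h =>
    Relation.EqvGen.mono
      (fun _ _ h => ⟨e, Finset.mem_insert_self _ _, Or.inl h⟩) _ _ (Quotient.exact h)
  constructor
  · intro h
    generalize hx : Quotient.mk (G.contrSetoid e) v = x at h
    generalize hy : Quotient.mk (G.contrSetoid e) w = y at h
    induction h generalizing v w with
    | rel x y h =>
      obtain ⟨f, hf, h⟩ := h
      have hr := G.reach_of_mem (Finset.mem_insert_of_mem (a := f.1) (b := e)
        (mem_lift.2 ⟨f.2, hf⟩))
      rcases h with h | h
      · have h1 := hx.trans (congrArg Prod.fst h).symm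
        have h2 := hy.trans (congrArg Prod.snd h).symm
        exact .trans _ _ _ (hmk h1) (.trans _ _ _ hr (.symm _ _ (hmk h2)))
      · have h1 := hx.trans (congrArg Prod.snd h).symm
        have h2 := hy.trans (congrArg Prod.fst h).symm
        exact .trans _ _ _ (hmk h1) (.trans _ _ _ (.symm _ _ hr) (.symm _ _ (hmk h2)))
    | refl x => exact hmk (hx.trans hy.symm)
    | symm x y _ ih => exact .symm _ _ (ih w v hy hx)
    | trans x y z _ _ ih1 ih2 =>
      obtain ⟨u, hu⟩ := Quotient.exists_rep y
      exact .trans _ _ _ (ih1 v u hx hu) (ih2 u w hu hy)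
  · intro h
    induction h with
    | rel v w h =>
      obtain ⟨f, hf, h⟩ := h
      by_cases hfe : f = e
      · subst hfe
        have : Quotient.mk (G.contrSetoid f) v = Quotient.mk _ w := by
          rcases h with h | h
          · exact Quotient.sound (s := G.contrSetoid f) (.rel _ _ h)
          · exact (Quotient.sound (s := G.contrSetoid f) (.rel _ _ h)).symm
        rw [this]
        exact .refl _
      · obtain ⟨hne, hf⟩ := mem_lift.1 (Finset.mem_of_mem_insert_of_ne hf hfe)
        refine .rel _ _ ⟨⟨f, hne⟩, hf, ?_⟩
        rcases h with h | h
        · left; simp [contract, h]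
        · right; simp [contract, h]
    | refl v => exact .refl _
    | symm v w _ ih => exact .symm _ _ ih
    | trans u v w _ _ ih1 ih2 => exact .trans _ _ _ ih1 ih2

theorem isForest_delete {V E : Type} [Finite V] [DecidableEq E] (G : Multigraph V E) (e : E)
    [DecidableEq {e' : E // e' ≠ e}] (B : Finset {e' : E // e' ≠ e}) :
    (G.delete e).IsForest B ↔ G.IsForest (lift B) := by
  rw [isForest_iff, isForest_iff]
  constructor
  · intro h f hf
    obtain ⟨hne, hf⟩ := mem_lift.1 hf
    have := h _ hf
    rw [reach_delete, lift_erase] at this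
    exact this
  · intro h f hf
    rw [reach_delete, lift_erase]
    exact h f.1 (mem_lift.2 ⟨f.2, hf⟩)

theorem isForest_contract {V E : Type} [Finite V] [DecidableEq E] (G : Multigraph V E) {e : E}
    (hloop : ¬ G.IsLoop e) [DecidableEq {e' : E // e' ≠ e}] (B : Finset {e' : E // e' ≠ e}) :
    (G.contract e).IsForest B ↔ G.IsForest (insert e (lift B)) := by
  have he : e ∉ lift B := fun h => (mem_lift.1 h).1 rfl
  -- For `f ≠ e`, the bridge condition is the same in `G / e` and in `G`.
  have key : (G.contract e).IsForest B ↔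
      ∀ f ∈ lift B, ¬ G.Reach (insert e ((lift B).erase f)) (G.ends f).1 (G.ends f).2 := by
    rw [isForest_iff]
    constructor
    · intro h f hf
      obtain ⟨hne, hf⟩ := mem_lift.1 hf
      have := h _ hf
      rw [← lift_erase B ⟨f, hne⟩, ← reach_contract]
      exact this
    · intro h f hf
      have := h f.1 (mem_lift.2 ⟨f.2, hf⟩)
      rw [← lift_erase B f, ← reach_contract] at this
      exact this
  rw [key, isForest_iff]
  constructor
  · intro h f hf
    rcases Finset.mem_insert.1 hf with rfl | hf
    · rw [Finset.erase_insert he]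
      intro hr
      obtain ⟨g, hg, hr⟩ := G.exists_exchange hloop _ hr
      exact h g hg hr
    · rw [Finset.erase_insert_of_ne (ne_of_mem_of_not_mem hf he).symm]
      exact h f hf
  · intro h f hf
    rw [← Finset.erase_insert_of_ne (ne_of_mem_of_not_mem hf he).symm]
    exact h f (Finset.mem_insert_of_mem hf)

/-! ### Products over components -/

/-- If the setoid `t` on `V / s` pulls back to `u` on `V`, the product of the total weights of
the classes of `u` can be computed in two stages, summing first over the classes of `s`. -/
theorem prod_class_sum {V : Type} [Fintype V] (s u : Setoid V) [Fintype (Quotient s)]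
    (t : Setoid (Quotient s)) [Fintype (Quotient u)] [Fintype (Quotient t)]
    (h : ∀ v w, t (Quotient.mk s v) (Quotient.mk s w) ↔ u v w) (q : V → ℝ) :
    ∏ c : Quotient u, ∑ v ∈ Finset.univ.filter (fun v => Quotient.mk u v = c), q v =
      ∏ c : Quotient t, ∑ x ∈ Finset.univ.filter (fun x => Quotient.mk t x = c),
        ∑ v ∈ Finset.univ.filter (fun v => Quotient.mk s v = x), q v := by
  let m : Quotient u → Quotient t :=
    Quotient.lift (fun v => Quotient.mk t (Quotient.mk s v))
      fun v w hvw => Quotient.sound ((h v w).2 hvw)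
  have hinj : Function.Injective m := by
    intro c c' hcc
    induction c using Quotient.inductionOn with
    | h v => induction c' using Quotient.inductionOn with
      | h w => exact Quotient.sound ((h v w).1 (Quotient.exact hcc))
  have hsurj : Function.Surjective m := by
    intro c
    induction c using Quotient.inductionOn with
    | h x => induction x using Quotient.inductionOn with
      | h v => exact ⟨Quotient.mk u v, rfl⟩
  refine Fintype.prod_bijective m ⟨hinj, hsurj⟩ _ _ fun c => ?_
  have hm : ∀ v, Quotient.mk u v = c ↔ Quotient.mk t (Quotient.mk s v) = m c := fun v =>
    ⟨fun hv => hv ▸ rfl, fun hv => hinj hv⟩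
  rw [← Finset.sum_fiberwise_of_maps_to
    (s := Finset.univ.filter (fun v => Quotient.mk u v = c))
    (t := Finset.univ.filter (fun x => Quotient.mk t x = m c)) (g := Quotient.mk s)
    (by intro v hv; simpa [hm] using hv)]
  refine Finset.sum_congr rfl fun x hx => Finset.sum_congr ?_ fun _ _ => rfl
  ext v
  simp only [Finset.mem_filter, Finset.mem_univ, true_and] at hx ⊢
  rw [hm]
  exact ⟨fun hv => hv.2, fun hv => ⟨hv ▸ hx, hv⟩⟩

theorem prod_qComp_delete {V E : Type} [Fintype V] (G : Multigraph V E) (e : E)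
    (B : Finset {e' : E // e' ≠ e}) (q : V → ℝ) :
    ∏ c, (G.delete e).qComp B q c = ∏ c, G.qComp (lift B) q c := by
  have : (G.delete e).compSetoid B = G.compSetoid (lift B) := by
    ext v w
    exact G.reach_delete e B v w
  unfold qComp
  rw [this]

/-! ### Sums over edge sets and products of edge variables -/

theorem genU_eq {V E : Type} [Fintype V] [Fintype E] [DecidableEq E] (G : Multigraph V E)
    (α : E → ℝ) (q : V → ℝ) :
    G.genU α q = ∑ A, if G.IsForest A then
      (∏ f ∈ Finset.univ \ A, α f) * ∏ c, G.qComp A q c else 0 :=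
  Finset.sum_filter _ _

/-- The subsets of `E` are the sets `B` and `insert e B`, with `B` avoiding `e`. -/
theorem sum_split {E : Type} [Fintype E] [DecidableEq E] (e : E)
    [Fintype {e' : E // e' ≠ e}] (F : Finset E → ℝ) :
    ∑ A, F A = ∑ B : Finset {e' : E // e' ≠ e}, F (lift B) +
      ∑ B : Finset {e' : E // e' ≠ e}, F (insert e (lift B)) := by
  have he : ∀ B : Finset {e' : E // e' ≠ e}, e ∉ lift B := fun B h => (mem_lift.1 h).1 rfl
  have hinj : Function.Injective (lift (e := e)) := Finset.map_injective _
  have hsub : ∀ A : Finset E, lift (A.subtype (· ≠ e)) = A.erase e := by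
    intro A
    ext f
    simp [mem_lift]
  rw [← Finset.sum_filter_add_sum_filter_not Finset.univ (fun A : Finset E => e ∉ A)]
  congr 1
  · symm
    refine Finset.sum_nbij lift (fun B _ => by simpa using he B) hinj.injOn ?_ fun _ _ => rfl
    intro A hA
    refine ⟨A.subtype (· ≠ e), by simp, ?_⟩
    rw [hsub]
    exact Finset.erase_eq_of_notMem (by simpa using hA)
  · symm
    refine Finset.sum_nbij (fun B => insert e (lift B)) (fun B _ => by simp) ?_ ?_ fun _ _ => rfl
    · intro B _ B' _ h
      apply hinj
      rw [← Finset.erase_insert (he B), ← Finset.erase_insert (he B')]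
      exact congrArg (fun A => Finset.erase A e) h
    · intro A hA
      refine ⟨A.subtype (· ≠ e), by simp, ?_⟩
      change insert e (lift _) = A
      rw [hsub]
      exact Finset.insert_erase (by simpa using hA)

theorem prod_compl_insert_lift {E : Type} [Fintype E] [DecidableEq E] (e : E)
    [Fintype {e' : E // e' ≠ e}] [DecidableEq {e' : E // e' ≠ e}] (α : E → ℝ)
    (B : Finset {e' : E // e' ≠ e}) :
    ∏ f ∈ Finset.univ \ insert e (lift B), α f = ∏ f ∈ Finset.univ \ B, α f.1 := by
  have : Finset.univ \ insert e (lift B) = lift (Finset.univ \ B) := by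
    ext f
    simp only [mem_lift, Finset.mem_sdiff, Finset.mem_univ, Finset.mem_insert, true_and, not_or,
      not_exists]
    exact ⟨fun h => ⟨h.1, h.2 h.1⟩, fun ⟨h, hf⟩ => ⟨h, fun _ => hf⟩⟩
  rw [this, lift, Finset.prod_map]
  rfl

theorem prod_compl_lift {E : Type} [Fintype E] [DecidableEq E] (e : E)
    [Fintype {e' : E // e' ≠ e}] [DecidableEq {e' : E // e' ≠ e}] (α : E → ℝ)
    (B : Finset {e' : E // e' ≠ e}) :
    ∏ f ∈ Finset.univ \ lift B, α f = α e * ∏ f ∈ Finset.univ \ B, α f.1 := by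
  have he : e ∈ Finset.univ \ lift B := by simp [mem_lift]
  rw [← prod_compl_insert_lift, ← Finset.mul_prod_erase _ _ he, Finset.sdiff_insert]

end Multigraph

/-- deletion–contraction for the generalized first Symanzik polynomial
at a semi-regular edge; the merged vertex of `G/e` carries the weight `q_{v₁} + q_{v₂}`
(each class of the contraction carries the sum of the weights of its vertices). -/
theorem genU_deletion_contraction {V E : Type} [Fintype V] [Fintype E] [DecidableEq E]
    (G : Multigraph V E) (e : E) (hloop : ¬ G.IsLoop e) (α : E → ℝ) (q : V → ℝ) :
    G.genU α q
      = α e * (G.delete e).genU (fun e' => α e'.1) q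
        + (G.contract e).genU (fun e' => α e'.1)
            (fun c => ∑ v ∈ Finset.univ.filter
              (fun v => Quotient.mk (G.contrSetoid e) v = c), q v) := by
  simp only [Multigraph.genU_eq]
  rw [Multigraph.sum_split e, Finset.mul_sum]
  refine congrArg₂ (· + ·) ?_ ?_
  · refine Finset.sum_congr rfl fun B _ => ?_
    simp only [G.isForest_delete e B]
    rw [G.prod_qComp_delete, Multigraph.prod_compl_lift, mul_ite, mul_zero, mul_assoc]
  · refine Finset.sum_congr rfl fun B _ => ?_
    simp only [G.isForest_contract hloop B]
    rw [Multigraph.prod_compl_insert_lift]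
    unfold Multigraph.qComp
    rw [Multigraph.prod_class_sum (G.contrSetoid e) (G.compSetoid (insert e (Multigraph.lift B)))
      ((G.contract e).compSetoid B) (G.reach_contract e B)]
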